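/- arXiv:2501.01812 — 2 statements merged into one kernel-verified Lean document; each statement's English description precedes it below -/
import Mathlib

section
/- Let Π be a set of words over the two-letter alphabet {∀, ∃} that is closed relative to subwords, such that Π ⊆ P₁ ∪ P₂ and the word ∀∀∀ does not belong to Π. Then Π ⊆ P₂. -/
/-- The two-letter alphabet `{∀, ∃}` of quantifier symbols. -/
inductive QSym where
  | fa : QSym  -- the letter ∀
  | ex : QSym  -- the letter ∃
  deriving DecidableEq

/-- `P₁ = {∃^i ∀^j : i, j ∈ ℕ}`. -/
def P1 : Set (List QSym) :=
  {w | ∃ i j : ℕ, w = List.replicate i QSym.ex ++ List.replicate j QSym.fa}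

/-- `P₂ = {∃^i ∀^j ∃^k : i, k ∈ ℕ, j ≤ 2}`. -/
def P2 : Set (List QSym) :=
  {w | ∃ i j k : ℕ, j ≤ 2 ∧
    w = List.replicate i QSym.ex ++ List.replicate j QSym.fa ++ List.replicate k QSym.ex}

/-- `P₃ = {∃^i ∀^j : i ∈ ℕ, j ≤ 2}`. -/
def P3 : Set (List QSym) :=
  {w | ∃ i j : ℕ, j ≤ 2 ∧ w = List.replicate i QSym.ex ++ List.replicate j QSym.fa}

/-- A set of words is closed relative to subwords if it contains every word obtained from
one of its members by removing some letters (i.e. every sublist of a member). -/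
def SubwordClosed (Pi : Set (List QSym)) : Prop :=
  ∀ w ∈ Pi, ∀ u : List QSym, u.Sublist w → u ∈ Pi

theorem SubwordClosed.count_lt_of_replicate_notMem {Pi : Set (List QSym)}
    (hclosed : SubwordClosed Pi) {n : ℕ} {a : QSym} (hn : List.replicate n a ∉ Pi)
    {w : List QSym} (hw : w ∈ Pi) : w.count a < n := by
  contrapose! hn
  exact hclosed w hw _ (List.replicate_sublist_iff.mpr hn)

theorem mem_P3_of_mem_P1_of_count_fa_le_two {w : List QSym} (hw : w ∈ P1)
    (hcount : w.count QSym.fa ≤ 2) : w ∈ P3 := by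
  obtain ⟨i, j, rfl⟩ := hw
  exact ⟨i, j, by simpa [List.count_replicate] using hcount, rfl⟩

theorem P3_subset_P2 : P3 ⊆ P2 := by
  rintro _ ⟨i, j, hj, rfl⟩
  exact ⟨i, j, 0, hj, by simp⟩

/-- if `Π` is closed relative to subwords, `Π ⊆ P₁ ∪ P₂` and `∀∀∀ ∉ Π`,
then `Π ⊆ P₂`. -/
theorem stmt_5 (Pi : Set (List QSym)) (hclosed : SubwordClosed Pi)
    (hsub : Pi ⊆ P1 ∪ P2)
    (hfff : [QSym.fa, QSym.fa, QSym.fa] ∉ Pi) :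
    Pi ⊆ P2 := by
  intro w hw
  rcases hsub hw with hP1 | hP2
  · have hcount : w.count QSym.fa < 3 :=
      hclosed.count_lt_of_replicate_notMem (n := 3) (a := QSym.fa) hfff hw
    exact P3_subset_P2 (mem_P3_of_mem_P1_of_count_fa_le_two hP1 (Nat.le_of_lt_succ hcount))
  · exact hP2
end

section
/- Let n ≥ 1 and let Π₁, …, Πₙ be nonempty sets of words over the alphabet {∀, ∃}, each closed relative to subwords, with Πᵢ ⊆ P₁ ∪ P₂ for every i, and suppose there exist no indices i ≠ j such that the word ∀∃ belongs to Πᵢ and the word ∀∀∀ belongs to Πⱼ. Then at least one of the following holds: (1) Πᵢ ⊆ P₁ for every i; (2) Πᵢ ⊆ P₂ for every i; (3) there exists an index i₀ such that Πᵢ ⊆ P₃ for every i ≠ i₀. -/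
/-!
The sets `P₁`, `P₂` and `P₃ = P₁ ∩ P₂` are determined by forbidden subwords: a word avoiding `∀∃`
is in `P₁`, and a word avoiding `∀∃∀` and `∀∀∀` is in `P₂`. As no word of `P₁ ∪ P₂` contains `∀∃∀`,
a subword-closed `Πᵢ ⊆ P₁ ∪ P₂` is inside `P₁` unless it contains `∀∃`, and inside `P₂` unless it
contains `∀∀∀`. Hence `Πᵢ ⊆ P₁` or `Πⱼ ⊆ P₂` whenever `i ≠ j`, and the rest is logic: if
`Πₐ ⊈ P₁` and `Π_b ⊈ P₂`, then `a = b`, and every other `Πᵢ` is inside both sets.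
-/

open QSym

theorem exists_eq_replicate_append_replicate_of_not_sublist {α : Type*} {a b : α} {w : List α}
    (hw : ∀ c ∈ w, c = a ∨ c = b) (hba : ¬ [b, a].Sublist w) :
    ∃ i j : ℕ, w = List.replicate i a ++ List.replicate j b := by
  induction w with
  | nil => exact ⟨0, 0, rfl⟩
  | cons c w ih =>
    obtain ⟨hc, hw⟩ := List.forall_mem_cons.mp hw
    rcases hc with rfl | rfl
    · obtain ⟨i, j, rfl⟩ := ih hw fun h => hba (h.cons _)
      exact ⟨i + 1, j, rfl⟩
    · have ha : a ∉ w := fun ha => hba ((List.singleton_sublist.mpr ha).cons_cons c)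
      have hconst : ∀ d ∈ w, d = c := fun d hd =>
        (hw d hd).resolve_left fun hda => ha (hda ▸ hd)
      exact ⟨0, w.length + 1, congrArg (c :: ·) (List.eq_replicate_of_mem hconst)⟩

theorem QSym.eq_ex_or_eq_fa (q : QSym) : q = ex ∨ q = fa := by
  cases q <;> simp

theorem mem_P1_of_not_sublist {w : List QSym} (h : ¬ [fa, ex].Sublist w) : w ∈ P1 :=
  exists_eq_replicate_append_replicate_of_not_sublist (fun q _ => q.eq_ex_or_eq_fa) h

theorem mem_P2_of_not_sublist {w : List QSym} (hfef : ¬ [fa, ex, fa].Sublist w)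
    (hfff : ¬ [fa, fa, fa].Sublist w) : w ∈ P2 := by
  induction w with
  | nil => exact ⟨0, 0, 0, Nat.zero_le 2, rfl⟩
  | cons q w ih =>
    cases q with
    | ex =>
      obtain ⟨i, j, k, hj, rfl⟩ := ih (fun h => hfef (h.cons _)) (fun h => hfff (h.cons _))
      exact ⟨i + 1, j, k, hj, rfl⟩
    | fa =>
      obtain ⟨j, k, rfl⟩ := exists_eq_replicate_append_replicate_of_not_sublist
        (fun q _ => q.eq_ex_or_eq_fa.symm) fun h => hfef (h.cons_cons fa)
      have hj : j < 2 := by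
        by_contra! hj
        have hff : [fa, fa].Sublist (List.replicate j fa) :=
          (List.replicate_sublist_replicate fa).mpr hj
        exact hfff ((hff.trans (List.sublist_append_left _ _)).cons_cons fa)
      exact ⟨0, j + 1, k, hj, rfl⟩

theorem P1_inter_P2_subset_P3 : P1 ∩ P2 ⊆ P3 := by
  rintro w ⟨⟨i, j, rfl⟩, i', j', k', hj', h⟩
  have hj : j = j' := by simpa [List.count_replicate] using congrArg (List.count fa) h
  exact ⟨i, j, hj ▸ hj', rfl⟩

theorem fa_ex_fa_notMem_P1_union_P2 : [fa, ex, fa] ∉ P1 ∪ P2 := by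
  rintro (⟨i, j, h⟩ | ⟨i, j, k, -, h⟩)
  · rcases i with _ | i <;> rcases j with _ | _ | j <;> simp [List.replicate_succ] at h
  · rcases i with _ | i <;> rcases j with _ | _ | j <;> rcases k with _ | _ | k <;>
      simp [List.replicate_succ] at h

namespace SubwordClosed

variable {L : Set (List QSym)}

theorem subset_P1 (hL : SubwordClosed L) (hfe : [fa, ex] ∉ L) : L ⊆ P1 :=
  fun w hw => mem_P1_of_not_sublist fun h => hfe (hL w hw _ h)

theorem subset_P2 (hL : SubwordClosed L) (hfef : [fa, ex, fa] ∉ L) (hfff : [fa, fa, fa] ∉ L) :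
    L ⊆ P2 :=
  fun w hw => mem_P2_of_not_sublist (fun h => hfef (hL w hw _ h)) fun h => hfff (hL w hw _ h)

end SubwordClosed

theorem forall_or_forall_or_exists_forall_ne_and {ι : Type*} {p q : ι → Prop}
    (h : ∀ i j, i ≠ j → p i ∨ q j) :
    (∀ i, p i) ∨ (∀ i, q i) ∨ ∃ i₀, ∀ i, i ≠ i₀ → p i ∧ q i := by
  by_contra! ⟨⟨a, ha⟩, ⟨b, hb⟩, hex⟩
  obtain rfl : a = b := by
    by_contra hab
    exact (h a b hab).elim ha hb
  obtain ⟨i, hi, hpq⟩ := hex a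
  exact hpq ((h i a hi).resolve_right hb) ((h a i hi.symm).resolve_left ha)

theorem stmt_7_general {ι : Type*} (Pi : ι → Set (List QSym))
    (hclosed : ∀ i, SubwordClosed (Pi i))
    (hfef : ∀ i, [fa, ex, fa] ∉ Pi i)
    (hnotboth : ¬ ∃ i j, i ≠ j ∧ [fa, ex] ∈ Pi i ∧ [fa, fa, fa] ∈ Pi j) :
    (∀ i, Pi i ⊆ P1) ∨ (∀ i, Pi i ⊆ P2) ∨ ∃ i₀, ∀ i, i ≠ i₀ → Pi i ⊆ P3 := by
  have hor : ∀ i j, i ≠ j → Pi i ⊆ P1 ∨ Pi j ⊆ P2 := by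
    intro i j hij
    by_cases hfe : [fa, ex] ∈ Pi i
    · exact Or.inr ((hclosed j).subset_P2 (hfef j) fun hfff => hnotboth ⟨i, j, hij, hfe, hfff⟩)
    · exact Or.inl ((hclosed i).subset_P1 hfe)
  refine (forall_or_forall_or_exists_forall_ne_and hor).imp_right (Or.imp_right ?_)
  rintro ⟨i₀, h⟩
  exact ⟨i₀, fun i hi => (Set.subset_inter (h i hi).1 (h i hi).2).trans P1_inter_P2_subset_P3⟩

/-- let `Π₁, …, Πₙ` (`n ≥ 1`) be nonempty subword-closed sets of words with
`Πᵢ ⊆ P₁ ∪ P₂` for all `i`, such that there are no indices `i ≠ j` with `∀∃ ∈ Πᵢ` and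
`∀∀∀ ∈ Πⱼ`. Then all `Πᵢ ⊆ P₁`, or all `Πᵢ ⊆ P₂`, or there is an index `i₀` such that
`Πᵢ ⊆ P₃` for every `i ≠ i₀`. -/
theorem stmt_7 (n : ℕ) (hn : 1 ≤ n) (Pi : Fin n → Set (List QSym))
    (hne : ∀ i, (Pi i).Nonempty)
    (hclosed : ∀ i, SubwordClosed (Pi i))
    (hsub : ∀ i, Pi i ⊆ P1 ∪ P2)
    (hnotboth : ¬ ∃ i j : Fin n, i ≠ j ∧
      [QSym.fa, QSym.ex] ∈ Pi i ∧ [QSym.fa, QSym.fa, QSym.fa] ∈ Pi j) :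
    (∀ i, Pi i ⊆ P1) ∨ (∀ i, Pi i ⊆ P2) ∨
      ∃ i₀ : Fin n, ∀ i : Fin n, i ≠ i₀ → Pi i ⊆ P3 :=
  stmt_7_general Pi hclosed (fun i h => fa_ex_fa_notMem_P1_union_P2 (hsub i h)) hnotboth
end
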